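/- Let H = (A, B, E) be a finite bipartite graph with minimum degree at least δ (δ ≥ 1 an integer), let x ≥ 2 and 0 ≤ s ≤ 1 be real numbers. Then T̃_H(x,0) · T̃_H(0,x) ≥ Π_{v ∈ V(H)} G(d_v, x, s, γ_{x,s}(δ)) ≥ Π_{v ∈ V(H)} G(d_v, x, s, s). -/

import Mathlib

open scoped Classical

/-- The permutation Tutte polynomial of a bipartite graph `G` on finite vertex set `V`
with bipartition class `A` (the other class being `Aᶜ`). -/
noncomputable def permTutte {V : Type*} [Fintype V] [DecidableEq V]
    (G : SimpleGraph V) (A : Set V) (x y : ℝ) : ℝ :=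
  ((Fintype.card V).factorial : ℝ)⁻¹ *
    ∑ π : V ≃ Fin (Fintype.card V),
      x ^ Nat.card {i : V // i ∈ A ∧ ∀ j, G.Adj i j → π j < π i} *
      y ^ Nat.card {j : V // j ∉ A ∧ ∀ i, G.Adj j i → π i < π j}

/-- `G` is bipartite with parts `A` and `Aᶜ`. -/
def IsBipartition {V : Type*} (G : SimpleGraph V) (A : Set V) : Prop :=
  ∀ u v, G.Adj u v → (u ∈ A ↔ v ∉ A)

/-- `γ_{x,s}(d) = (d+x)s / ((d+x)s + (d+1)x(1−s))`. -/
noncomputable def gam (x s d : ℝ) : ℝ :=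
  ((d + x) * s) / ((d + x) * s + (d + 1) * x * (1 - s))

/-- `G(d,x,s,γ) = ((d+x)s/(d+1) + x(1−s)) · (s − (s/(d+1))γ^d)`. -/
noncomputable def Gfun (d : ℕ) (x s γ : ℝ) : ℝ :=
  (((d : ℝ) + x) * s / ((d : ℝ) + 1) + x * (1 - s)) *
    (s - s / ((d : ℝ) + 1) * γ ^ d)


noncomputable def ind (p : Prop) : ℝ := if p then 1 else 0

theorem ind_pos {p : Prop} (h : p) : ind p = 1 := by simp [ind, h]
theorem ind_neg {p : Prop} (h : ¬ p) : ind p = 0 := by simp [ind, h]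
theorem ind_nonneg (p : Prop) : 0 ≤ ind p := by unfold ind; split_ifs <;> norm_num
theorem ind_le_one (p : Prop) : ind p ≤ 1 := by unfold ind; split_ifs <;> norm_num
theorem ind_mono {p q : Prop} (h : p → q) : ind p ≤ ind q := by
  by_cases hp : p
  · rw [ind_pos hp, ind_pos (h hp)]
  · rw [ind_neg hp]; exact ind_nonneg q

theorem sum_ind {V : Type*} (T : Finset V) (p : V → Prop) :
    ∑ i ∈ T, ind (p i) = ((T.filter p).card : ℝ) := by
  unfold ind; rw [Finset.sum_boole]

theorem harris2 {V α : Type*} [Fintype V] [DecidableEq V] [Fintype α] [LinearOrder α] (w : V → α → ℝ)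
    (hw : ∀ v a, 0 ≤ w v a) (f g : (V → α) → ℝ) (hf0 : ∀ a, 0 ≤ f a) (hg0 : ∀ a, 0 ≤ g a)
    (hf : Monotone f) (hg : Monotone g) :
    (∑ a, (∏ v, w v (a v)) * f a) * (∑ a, (∏ v, w v (a v)) * g a) ≤
      (∑ a : V → α, ∏ v, w v (a v)) * ∑ a, (∏ v, w v (a v)) * (f a * g a) := by
  refine fkg f g (fun a : V → α => ∏ v, w v (a v)) (fun a => Finset.prod_nonneg fun v _ => hw _ _)
    hf0 hg0 hf hg ?_
  intro a b
  simp only [← Finset.prod_mul_distrib]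
  refine le_of_eq (Finset.prod_congr rfl fun v _ => ?_)
  simp only [Pi.inf_apply, Pi.sup_apply]
  rcases le_total (a v) (b v) with h | h
  · simp [h]
  · simp [h, mul_comm]

/-- monotone in coordinates in `A`, antitone in others -/
def TwMono {V α : Type*} [LE α] (A : Set V) (f : (V → α) → ℝ) : Prop :=
  ∀ a b : V → α, (∀ v, v ∈ A → a v ≤ b v) → (∀ v, v ∉ A → b v ≤ a v) → f a ≤ f b

theorem harrisFlip {V α : Type*} [Fintype V] [DecidableEq V] [Fintype α] [LinearOrder α] (r : α → α)
    (hr : Antitone r) (hrr : ∀ a, r (r a) = a) (A : Set V) (w : V → α → ℝ)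
    (hw : ∀ v a, 0 ≤ w v a) (f g : (V → α) → ℝ) (hf0 : ∀ a, 0 ≤ f a) (hg0 : ∀ a, 0 ≤ g a)
    (hf : TwMono A f) (hg : TwMono A g) :
    (∑ a, (∏ v, w v (a v)) * f a) * (∑ a, (∏ v, w v (a v)) * g a) ≤
      (∑ a : V → α, ∏ v, w v (a v)) * ∑ a, (∏ v, w v (a v)) * (f a * g a) := by
  let e0 : (V → α) → (V → α) := fun a v => if v ∈ A then a v else r (a v)
  have he : Function.Involutive e0 := by
    intro a; funext v; by_cases h : v ∈ A <;> simp [e0, h, hrr]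
  let e : Equiv.Perm (V → α) := he.toPerm
  have hm : ∀ f : (V → α) → ℝ, TwMono A f → Monotone (fun a => f (e a)) := by
    intro f hf a b hab
    apply hf
    · intro v hv
      simpa [e, e0, hv] using hab v
    · intro v hv
      simpa [e, e0, hv] using hr (hab v)
  have := harris2 (fun v l => w v (if v ∈ A then l else r l)) (fun v a => hw _ _)
    (fun a => f (e a)) (fun a => g (e a)) (fun a => hf0 _) (fun a => hg0 _) (hm f hf) (hm g hg)
  have key : ∀ h : (V → α) → ℝ,
      ∑ a, (∏ v, w v (if v ∈ A then a v else r (a v))) * h (e a) = ∑ a, (∏ v, w v (a v)) * h a := by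
    intro h
    exact Equiv.sum_comp e (fun a => (∏ v, w v (a v)) * h a)
  have k1 := key (fun _ => 1)
  simp only [mul_one] at k1
  rw [key f, key g, key (fun a => f a * g a), k1] at this
  exact this

theorem TwMono.prod {V α ι : Type*} [LE α] (A : Set V) (φ : ι → (V → α) → ℝ)
    (h0 : ∀ i a, 0 ≤ φ i a) (h : ∀ i, TwMono A (φ i)) (s : Finset ι) :
    TwMono A (fun a => ∏ i ∈ s, φ i a) := fun a b h1 h2 =>
  Finset.prod_le_prod (fun i _ => h0 i a) (fun i _ => h i a b h1 h2)

theorem harrisProd {V α ι : Type*} [Fintype V] [DecidableEq V] [Fintype α] [LinearOrder α] (r : α → α)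
    (hr : Antitone r) (hrr : ∀ a, r (r a) = a) (A : Set V) (w : V → α → ℝ)
    (hw : ∀ v a, 0 ≤ w v a) (φ : ι → (V → α) → ℝ)
    (h0 : ∀ i a, 0 ≤ φ i a) (h : ∀ i, TwMono A (φ i)) (c : ι → ℝ) (hc : ∀ i, 0 ≤ c i)
    (hcφ : ∀ i, c i * ∑ a : V → α, ∏ v, w v (a v) ≤ ∑ a, (∏ v, w v (a v)) * φ i a) (s : Finset ι) :
    (∏ i ∈ s, c i) * ∑ a : V → α, ∏ v, w v (a v) ≤ ∑ a, (∏ v, w v (a v)) * ∏ i ∈ s, φ i a := by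
  induction s using Finset.induction_on with
  | empty => simp
  | insert i s hi ih =>
    have hZ : 0 ≤ ∑ a : V → α, ∏ v, w v (a v) :=
      Finset.sum_nonneg fun a _ => Finset.prod_nonneg fun v _ => hw _ _
    have hp : 0 ≤ ∏ i ∈ s, c i := Finset.prod_nonneg fun i _ => hc i
    simp only [Finset.prod_insert hi]
    have H := harrisFlip r hr hrr A w hw (φ i) (fun a => ∏ i ∈ s, φ i a) (h0 i)
      (fun a => Finset.prod_nonneg fun i _ => h0 i a) (h i) (TwMono.prod A φ h0 h s)
    rcases hZ.eq_or_lt with hz | hz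
    · rw [← hz, mul_zero]
      refine Finset.sum_nonneg fun a _ => mul_nonneg (Finset.prod_nonneg fun v _ => hw _ _)
        (mul_nonneg (h0 _ _) (Finset.prod_nonneg fun i _ => h0 i a))
    · refine le_of_mul_le_mul_left (le_trans ?_ H) hz
      have := mul_le_mul (hcφ i) ih (mul_nonneg hp hZ) (le_trans (mul_nonneg (hc i) hZ) (hcφ i))
      refine le_trans (le_of_eq ?_) this
      ring

theorem symSum {V α : Type*} [Fintype V] [DecidableEq V] [Fintype α] (R : α → α → Prop)
    (w : V → α → ℝ) (T : Finset V) (w0 : α → ℝ) (hT : ∀ v ∈ T, w v = w0) (i k : V)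
    (hi : i ∈ T) (hk : k ∈ T) :
    ∑ a : V → α, (∏ v, w v (a v)) * ind (∀ u ∈ T, u ≠ k → R (a u) (a k)) =
    ∑ a : V → α, (∏ v, w v (a v)) * ind (∀ u ∈ T, u ≠ i → R (a u) (a i)) := by
  have hsT : ∀ u, u ∈ T ↔ Equiv.swap i k u ∈ T := by
    intro u
    by_cases h1 : u = i
    · subst h1; simp [hi, hk]
    by_cases h2 : u = k
    · subst h2; simp [hi, hk]
    rw [Equiv.swap_apply_of_ne_of_ne h1 h2]
  rw [← Equiv.sum_comp (Equiv.arrowCongr (Equiv.swap i k) (Equiv.refl α))]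
  refine Finset.sum_congr rfl fun a _ => ?_
  have hfun : ∀ v, (Equiv.arrowCongr (Equiv.swap i k) (Equiv.refl α)) a v = a (Equiv.swap i k v) := by
    intro v; simp [Equiv.arrowCongr]
  simp only [hfun]
  congr 1
  · rw [← Equiv.prod_comp (Equiv.swap i k)]
    refine Finset.prod_congr rfl fun v _ => ?_
    rw [Equiv.swap_apply_self]
    by_cases hv : v ∈ T
    · rw [hT v hv, hT _ ((hsT v).1 hv)]
    · rw [Equiv.swap_apply_of_ne_of_ne] <;> rintro rfl <;> contradiction
  · congr 1
    rw [Equiv.swap_apply_right]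
    apply propext
    constructor
    · intro h u hu hne
      have := h (Equiv.swap i k u) ((hsT u).1 hu) (by
        intro h; apply hne; rw [← Equiv.swap_apply_self i k u, h, Equiv.swap_apply_right])
      simpa using this
    · intro h u hu hne
      refine h _ ((hsT u).1 hu) ?_
      intro h; apply hne; rw [← Equiv.swap_apply_self i k u, h, Equiv.swap_apply_left]

theorem symWeak {V α : Type*} [Fintype V] [DecidableEq V] [Fintype α] [LinearOrder α]
    (w : V → α → ℝ) (hw : ∀ v a, 0 ≤ w v a)
    (T : Finset V) (w0 : α → ℝ) (hT : ∀ v ∈ T, w v = w0) (i : V) (hi : i ∈ T) :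
    ∑ a : V → α, (∏ v, w v (a v)) ≤ T.card *
    ∑ a : V → α, (∏ v, w v (a v)) * ind (∀ u ∈ T, u ≠ i → a u ≤ a i) := by
  have : (T.card : ℝ) *
    ∑ a : V → α, (∏ v, w v (a v)) * ind (∀ u ∈ T, u ≠ i → a u ≤ a i)
    = ∑ k ∈ T, ∑ a : V → α, (∏ v, w v (a v)) *
      ind (∀ u ∈ T, u ≠ k → a u ≤ a k) := by
    rw [Finset.sum_congr rfl fun k hk => symSum (· ≤ ·) w T w0 hT i k hi hk]
    simp
  rw [this, Finset.sum_comm]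
  refine Finset.sum_le_sum fun a _ => ?_
  rw [← Finset.mul_sum]
  refine le_mul_of_one_le_right (Finset.prod_nonneg fun v _ => hw _ _) ?_
  obtain ⟨k, hk, hmax⟩ := Finset.exists_max_image T a ⟨i, hi⟩
  refine le_trans ?_ (Finset.single_le_sum (fun j _ => ?_) hk)
  · rw [ind_pos fun u hu _ => hmax u hu]
  · exact ind_nonneg _

theorem symStrict {V α : Type*} [Fintype V] [DecidableEq V] [Fintype α] [LinearOrder α]
    (w : V → α → ℝ) (hw : ∀ v a, 0 ≤ w v a)
    (T : Finset V) (w0 : α → ℝ) (hT : ∀ v ∈ T, w v = w0) (i : V) (hi : i ∈ T) :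
    T.card * ∑ a : V → α, (∏ v, w v (a v)) *
      ind (∀ u ∈ T, u ≠ i → a u < a i) ≤ ∑ a : V → α, (∏ v, w v (a v)) := by
  have : (T.card : ℝ) *
    ∑ a : V → α, (∏ v, w v (a v)) * ind (∀ u ∈ T, u ≠ i → a u < a i)
    = ∑ k ∈ T, ∑ a : V → α, (∏ v, w v (a v)) *
      ind (∀ u ∈ T, u ≠ k → a u < a k) := by
    rw [Finset.sum_congr rfl fun k hk => symSum (· < ·) w T w0 hT i k hi hk]
    simp
  rw [this, Finset.sum_comm]
  refine Finset.sum_le_sum fun a _ => ?_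
  rw [← Finset.mul_sum]
  refine mul_le_of_le_one_right (Finset.prod_nonneg fun v _ => hw _ _) ?_
  rw [sum_ind]
  have : (T.filter fun k => ∀ u ∈ T, u ≠ k → a u < a k).card ≤ 1 := by
    rw [Finset.card_le_one]
    intro p hp q hq
    simp only [Finset.mem_filter] at hp hq
    by_contra hne
    exact lt_asymm (hp.2 q hq.1 (Ne.symm hne)) (hq.2 p hp.1 hne)
  exact_mod_cast this

noncomputable def phi {V α : Type*} [LinearOrder α] (G : SimpleGraph V) (A : Set V) (x : ℝ)
    (v : V) (f : V → α) : ℝ :=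
  if v ∈ A then 1 + (x - 1) * ind (∀ u, G.Adj v u → f u ≤ f v)
  else 1 - ind (∀ u, G.Adj v u → f u < f v)

theorem phi_nonneg {V α : Type*} [LinearOrder α] (G : SimpleGraph V) (A : Set V) (x : ℝ)
    (hx : 1 ≤ x) (v : V) (f : V → α) : 0 ≤ phi G A x v f := by
  unfold phi
  split_ifs
  · have := mul_nonneg (sub_nonneg.2 hx) (ind_nonneg (∀ u, G.Adj v u → f u ≤ f v))
    linarith
  · linarith [ind_le_one (∀ u, G.Adj v u → f u < f v)]

theorem phi_le {V α : Type*} [LinearOrder α] (G : SimpleGraph V) (A : Set V) (x : ℝ)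
    (hx : 1 ≤ x) (v : V) (f : V → α) : phi G A x v f ≤ x := by
  unfold phi
  split_ifs
  · have := mul_le_of_le_one_right (sub_nonneg.2 hx) (ind_le_one (∀ u, G.Adj v u → f u ≤ f v))
    linarith
  · linarith [ind_nonneg (∀ u, G.Adj v u → f u < f v)]

theorem phi_mono {V α : Type*} [LinearOrder α] (G : SimpleGraph V) (A : Set V)
    (hbip : IsBipartition G A) (x : ℝ)
    (hx : 1 ≤ x) (v : V) : TwMono A (fun f : V → α => phi G A x v f) := by
  intro a b h1 h2
  unfold phi
  beta_reduce
  split_ifs with hv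
  · have := mul_le_mul_of_nonneg_left (ind_mono (p := ∀ u, G.Adj v u → a u ≤ a v)
      (q := ∀ u, G.Adj v u → b u ≤ b v)
      (fun h u hu => (h2 u ((hbip v u hu).1 hv)).trans ((h u hu).trans (h1 v hv))))
      (sub_nonneg.2 hx)
    linarith
  · have := ind_mono (p := ∀ u, G.Adj v u → b u < b v)
      (q := ∀ u, G.Adj v u → a u < a v)
      (fun h u hu => (h1 u (by
        by_contra hu'; exact hv ((hbip v u hu).2 hu'))).trans_lt ((h u hu).trans_le (h2 v hv)))
    linarith

/-- low / high weights -/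
noncomputable def wt {N : ℕ} (K : ℕ) (b : Bool) (l : Fin N) : ℝ :=
  if b then ind (l.val < K) else ind (¬ l.val < K)

theorem wt_nonneg {N : ℕ} (K : ℕ) (b : Bool) (l : Fin N) : 0 ≤ wt K b l := by
  unfold wt; split_ifs <;> exact ind_nonneg _

theorem wt_true {N : ℕ} {K : ℕ} {l : Fin N} (h : wt K true l ≠ 0) : l.val < K := by
  by_contra hh
  exact h (by simp [wt, ind, hh])

theorem wt_false {N : ℕ} {K : ℕ} {l : Fin N} (h : wt K false l ≠ 0) : K ≤ l.val := by
  by_contra hh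
  exact h (by simp only [wt, ind]; simp; omega)

theorem wt_sum {N : ℕ} (K : ℕ) (hK : K ≤ N) (b : Bool) :
    ∑ l : Fin N, wt K b l = if b then (K : ℝ) else (N : ℝ) - K := by
  have h1 : ∑ l : Fin N, ind (l.val < K) = (K : ℝ) := by
    have := Fin.sum_univ_eq_sum_range (fun l => ind (l < K)) N
    rw [this, sum_ind]
    congr 1
    convert Finset.card_range K using 2
    ext l; simp; omega
  cases b
  · have : ∀ l : Fin N, wt K false l = 1 - ind (l.val < K) := by
      intro l
      by_cases h : l.val < K <;> simp [wt, ind, h]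
    simp only [this]
    rw [Finset.sum_sub_distrib, h1]
    simp
  · simpa [wt] using h1

noncomputable def cc {V : Type*} [Fintype V] (G : SimpleGraph V) [DecidableRel G.Adj]
    (A : Set V) (x : ℝ) (b : V → Bool) (v : V) : ℝ :=
  if v ∈ A then (if b v then ((G.degree v : ℝ) + x) / ((G.degree v : ℝ) + 1) else x)
  else 1 - ind (∀ u, G.Adj v u → b u = true) / ((G.degree v : ℝ) + 1)

theorem cc_nonneg {V : Type*} [Fintype V] (G : SimpleGraph V) [DecidableRel G.Adj]
    (A : Set V) (x : ℝ) (hx : 1 ≤ x) (b : V → Bool) (v : V) : 0 ≤ cc G A x b v := by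
  unfold cc
  have : (0:ℝ) ≤ G.degree v := Nat.cast_nonneg _
  split_ifs
  · positivity
  · positivity
  · rw [sub_nonneg, div_le_one (by positivity)]
    linarith [ind_le_one (∀ u, G.Adj v u → b u = true)]

theorem stepB {V : Type*} [Fintype V] [DecidableEq V] (G : SimpleGraph V) [DecidableRel G.Adj]
    (A : Set V) (hbip : IsBipartition G A) (x : ℝ) (hx : 1 ≤ x) (N K : ℕ)
    (b : V → Bool) (hb : ∀ v, v ∉ A → b v = true) :
    (∏ v, cc G A x b v) * ∑ a : V → Fin N, ∏ v, wt K (b v) (a v) ≤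
      ∑ a : V → Fin N, (∏ v, wt K (b v) (a v)) * ∏ v, phi G A x v a := by
  refine harrisProd Fin.rev (fun a b h => Fin.rev_le_rev.2 h) Fin.rev_rev A
    (fun v => wt K (b v)) (fun v a => wt_nonneg _ _ _) (fun v a => phi G A x v a)
    (fun v a => phi_nonneg G A x hx v a) (fun v => phi_mono G A hbip x hx v)
    (fun v => cc G A x b v) (fun v => cc_nonneg G A x hx b v) ?_ Finset.univ
  intro i
  set d : ℝ := (G.degree i : ℝ) with hd
  have hd0 : 0 ≤ d := Nat.cast_nonneg _
  set T : Finset V := insert i (G.neighborFinset i) with hTdef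
  have hcard : (T.card : ℝ) = d + 1 := by
    rw [hTdef, Finset.card_insert_of_notMem (by simp), SimpleGraph.card_neighborFinset_eq_degree]
    push_cast; rfl
  have hrel : ∀ (a : V → Fin N) (R : Fin N → Fin N → Prop),
      (∀ u ∈ T, u ≠ i → R (a u) (a i)) ↔ ∀ u, G.Adj i u → R (a u) (a i) := by
    intro a R
    simp only [hTdef, Finset.mem_insert, SimpleGraph.mem_neighborFinset]
    constructor
    · intro h u hu
      exact h u (Or.inr hu) hu.ne'
    · rintro h u (rfl | hu) hne
      · exact absurd rfl hne
      · exact h u hu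
  set Z := ∑ a : V → Fin N, ∏ v, wt K (b v) (a v) with hZ
  have hne : ∀ a : V → Fin N, ∏ v, wt K (b v) (a v) ≠ 0 → ∀ v, wt K (b v) (a v) ≠ 0 :=
    fun a h v => (Finset.prod_ne_zero_iff.1 h) v (Finset.mem_univ v)
  by_cases hi : i ∈ A
  · simp only [cc, phi, hi, if_true]
    by_cases hbi : b i = true
    · have hT : ∀ v ∈ T, (fun v => wt (N := N) K (b v)) v = wt K true := by
        intro v hv
        simp only [hTdef, Finset.mem_insert, SimpleGraph.mem_neighborFinset] at hv
        rcases hv with rfl | hv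
        · simp [hbi]
        · simp [hb v ((hbip i v hv).1 hi)]
      have H := symWeak (fun v => wt (N := N) K (b v)) (fun v a => wt_nonneg _ _ _) T _ hT i
        (Finset.mem_insert_self _ _)
      rw [hcard] at H
      simp only [hrel _ (· ≤ ·)] at H
      simp only [mul_add, mul_one, Finset.sum_add_distrib, hbi, if_true]
      have e : ∀ a : V → Fin N, (∏ v, wt K (b v) (a v)) *
          ((x - 1) * ind (∀ u, G.Adj i u → a u ≤ a i)) = (x - 1) * ((∏ v, wt K (b v) (a v)) *
          ind (∀ u, G.Adj i u → a u ≤ a i)) := fun a => by ring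
      simp only [e, ← Finset.mul_sum]
      set Y := ∑ a : V → Fin N, (∏ v, wt K (b v) (a v)) * ind (∀ u, G.Adj i u → a u ≤ a i)
      rw [← hZ] at *
      rw [div_mul_eq_mul_div, div_le_iff₀ (by positivity)]
      nlinarith [mul_le_mul_of_nonneg_left H (sub_nonneg.2 hx)]
    · simp only [hbi]
      rw [hZ, Finset.mul_sum]
      refine Finset.sum_le_sum fun a _ => ?_
      by_cases h0 : ∏ v, wt K (b v) (a v) = 0
      · simp [h0]
      · have h1 := hne a h0
        rw [ind_pos]
        · simp [mul_comm]
        intro u hu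
        have h2 := h1 i
        have h3 := h1 u
        rw [hb u ((hbip i u hu).1 hi)] at h3
        rw [Bool.eq_false_of_not_eq_true hbi] at h2
        exact Fin.le_def.2 ((wt_true h3).le.trans (wt_false h2))
  · simp only [cc, phi, hi, if_false]
    by_cases hall : ∀ u, G.Adj i u → b u = true
    · rw [ind_pos hall]
      have hT : ∀ v ∈ T, (fun v => wt (N := N) K (b v)) v = wt K true := by
        intro v hv
        simp only [hTdef, Finset.mem_insert, SimpleGraph.mem_neighborFinset] at hv
        rcases hv with rfl | hv
        · simp [hb _ hi]
        · simp [hall v hv]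
      have H := symStrict (fun v => wt (N := N) K (b v)) (fun v a => wt_nonneg _ _ _) T _ hT i
        (Finset.mem_insert_self _ _)
      rw [hcard] at H
      simp only [hrel _ (· < ·)] at H
      simp only [mul_sub, mul_one, Finset.sum_sub_distrib]
      rw [← hZ] at *
      set Y := ∑ a : V → Fin N, (∏ v, wt K (b v) (a v)) * ind (∀ u, G.Adj i u → a u < a i)
      have : Y ≤ 1 / (d + 1) * Z := by
        rw [div_mul_eq_mul_div, le_div_iff₀ (by positivity)]
        linarith
      linarith
    · rw [ind_neg hall]
      simp only [zero_div, sub_zero, one_mul]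
      rw [hZ]
      refine Finset.sum_le_sum fun a _ => ?_
      by_cases h0 : ∏ v, wt K (b v) (a v) = 0
      · simp [h0]
      · have h1 := hne a h0
        rw [ind_neg]
        · simp
        intro hh
        push Not at hall
        obtain ⟨u, hu, hbu⟩ := hall
        have h2 := h1 i
        have h3 := h1 u
        rw [hb i hi] at h2
        rw [Bool.eq_false_of_not_eq_true hbu] at h3
        exact absurd (hh u hu) (not_lt.2 (Fin.le_def.2 ((wt_true h2).le.trans (wt_false h3))))

noncomputable def nu {V : Type*} [Fintype V] (G : SimpleGraph V) [DecidableRel G.Adj]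
    (A : Set V) (x : ℝ) (N K : ℕ) (v : V) (t : Bool) : ℝ :=
  if v ∈ A then (if t then (K : ℝ) * (((G.degree v : ℝ) + x) / ((G.degree v : ℝ) + 1))
    else ((N : ℝ) - K) * x)
  else (if t then (K : ℝ) else 0)

noncomputable def psi {V : Type*} [Fintype V] (G : SimpleGraph V) [DecidableRel G.Adj]
    (A : Set V) (v : V) (b : V → Bool) : ℝ :=
  if v ∈ A then 1 else 1 - ind (∀ u, G.Adj v u → b u = true) / ((G.degree v : ℝ) + 1)

theorem stepC {V : Type*} [Fintype V] [DecidableEq V] (G : SimpleGraph V) [DecidableRel G.Adj]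
    (A : Set V) (hbip : IsBipartition G A) (x : ℝ) (hx : 1 ≤ x) (N K : ℕ) (hK : K ≤ N) :
    ∑ b : V → Bool, (∏ v, nu G A x N K v (b v)) * ∏ v, psi G A v b ≤
      ∑ a : V → Fin N, ∏ v, phi G A x v a := by
  have hone : ∀ a : V → Fin N, ∑ b : V → Bool, ∏ v, wt K (b v) (a v) = 1 := by
    intro a
    rw [← Fintype.prod_sum (fun v t => wt K t (a v))]
    refine Finset.prod_eq_one fun v _ => ?_
    by_cases h : (a v).val < K <;> simp [wt, ind, h]
  have h1 : ∑ a : V → Fin N, ∏ v, phi G A x v a =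
      ∑ b : V → Bool, ∑ a : V → Fin N, (∏ v, wt K (b v) (a v)) * ∏ v, phi G A x v a := by
    rw [Finset.sum_comm]
    simp only [← Finset.sum_mul, hone, one_mul]
  rw [h1]
  refine Finset.sum_le_sum fun b _ => ?_
  by_cases hb : ∀ v, v ∉ A → b v = true
  · refine le_trans (le_of_eq ?_) (stepB G A hbip x hx N K b hb)
    rw [← Fintype.prod_sum (fun v l => wt K (b v) l), ← Finset.prod_mul_distrib,
      ← Finset.prod_mul_distrib]
    refine Finset.prod_congr rfl fun v _ => ?_
    rw [wt_sum K hK]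
    by_cases hv : v ∈ A
    · by_cases hbv : b v = true <;> simp [nu, psi, cc, hv, hbv, mul_comm]
    · simp [nu, psi, cc, hv, hb v hv, mul_comm]
  · push Not at hb
    obtain ⟨v, hv, hbv⟩ := hb
    rw [Finset.prod_eq_zero (Finset.mem_univ v) (by simp [nu, hv, hbv]), zero_mul]
    exact Finset.sum_nonneg fun a _ => mul_nonneg (Finset.prod_nonneg fun v _ => wt_nonneg _ _ _)
      (Finset.prod_nonneg fun v _ => phi_nonneg G A x hx v a)

theorem nu_nonneg {V : Type*} [Fintype V] (G : SimpleGraph V) [DecidableRel G.Adj]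
    (A : Set V) (x : ℝ) (hx : 1 ≤ x) (N K : ℕ) (hK : K ≤ N) (v : V) (t : Bool) :
    0 ≤ nu G A x N K v t := by
  have : (0:ℝ) ≤ N - K := sub_nonneg.2 (by exact_mod_cast hK)
  have : (0:ℝ) ≤ G.degree v := Nat.cast_nonneg _
  unfold nu
  split_ifs <;> positivity

theorem stepD {V : Type*} [Fintype V] [DecidableEq V] (G : SimpleGraph V) [DecidableRel G.Adj]
    (A : Set V) (hbip : IsBipartition G A) (x : ℝ) (hx : 1 ≤ x) (N K : ℕ) (hK : K ≤ N)
    (γ : ℝ) (hγ0 : 0 ≤ γ) (hγ1 : γ ≤ 1)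
    (hγ : ∀ v, (K : ℝ) * (((G.degree v : ℝ) + x) / ((G.degree v : ℝ) + 1)) ≤
      γ * ((K : ℝ) * (((G.degree v : ℝ) + x) / ((G.degree v : ℝ) + 1)) + ((N : ℝ) - K) * x)) :
    ∏ v, (if v ∈ A then
      (K : ℝ) * (((G.degree v : ℝ) + x) / ((G.degree v : ℝ) + 1)) + ((N : ℝ) - K) * x
      else (K : ℝ) * (1 - γ ^ G.degree v / ((G.degree v : ℝ) + 1))) ≤
      ∑ a : V → Fin N, ∏ v, phi G A x v a := by
  refine le_trans ?_ (stepC G A hbip x hx N K hK)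
  have hd : ∀ v, (0:ℝ) ≤ G.degree v := fun v => Nat.cast_nonneg _
  have hn := nu_nonneg G A x hx N K hK
  have key := harrisProd (fun t => !t) (by decide) (by decide) (∅ : Set V)
    (nu G A x N K) hn (psi G A) ?_ ?_
    (fun v => if v ∈ A then 1 else 1 - γ ^ G.degree v / ((G.degree v : ℝ) + 1)) ?_ ?_ Finset.univ
  · refine le_trans (le_of_eq ?_) key
    rw [← Fintype.prod_sum, ← Finset.prod_mul_distrib]
    refine Finset.prod_congr rfl fun v _ => ?_
    by_cases hv : v ∈ A <;> simp [nu, hv, mul_comm]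
  · intro v b
    unfold psi
    split_ifs
    · norm_num
    · have := hd v
      rw [sub_nonneg, div_le_one (by positivity)]
      linarith [ind_le_one (∀ u, G.Adj v u → b u = true)]
  · intro v a b _ h2
    unfold psi
    split_ifs
    · exact le_rfl
    · have := hd v
      refine sub_le_sub_left (div_le_div_of_nonneg_right (ind_mono fun h u hu => ?_)
        (by positivity)) _
      exact h2 u (by simp) (h u hu)
  · intro v
    have := hd v
    split_ifs
    · norm_num
    · rw [sub_nonneg, div_le_one (by positivity)]
      linarith [pow_le_one₀ (n := G.degree v) hγ0 hγ1]
  · intro v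
    have hdv := hd v
    unfold psi
    split_ifs with hv
    · simp
    · set Z := ∑ b : V → Bool, ∏ u, nu G A x N K u (b u) with hZ
      have hle : ∑ b : V → Bool, (∏ u, nu G A x N K u (b u)) *
          ind (∀ u, G.Adj v u → b u = true) ≤ γ ^ G.degree v * Z := by
        have e1 : ∀ b : V → Bool, (∏ u, nu G A x N K u (b u)) *
          ind (∀ u, G.Adj v u → b u = true) =
          ∏ u, (nu G A x N K u (b u) * ind (G.Adj v u → b u = true)) := by
          intro b
          rw [Finset.prod_mul_distrib]
          congr 1
          by_cases h : ∀ u, G.Adj v u → b u = true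
          · rw [ind_pos h, Finset.prod_eq_one]
            intro u _
            exact ind_pos (h u)
          · rw [ind_neg h]
            push Not at h
            obtain ⟨u, hu, hbu⟩ := h
            rw [Finset.prod_eq_zero (Finset.mem_univ u)]
            exact ind_neg (fun h => hbu (h hu))
        simp only [e1]
        rw [← Fintype.prod_sum (fun u t => nu G A x N K u t * ind (G.Adj v u → t = true)),
          hZ, ← Fintype.prod_sum (fun u t => nu G A x N K u t)]
        have e2 : γ ^ G.degree v = ∏ u, (if G.Adj v u then γ else 1) := by
          rw [Finset.prod_ite, Finset.prod_const, Finset.prod_const_one, mul_one,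
            ← SimpleGraph.card_neighborFinset_eq_degree]
          congr 2
          ext u; simp
        rw [e2, ← Finset.prod_mul_distrib]
        refine Finset.prod_le_prod (fun u _ => Finset.sum_nonneg fun t _ =>
          mul_nonneg (hn u t) (ind_nonneg _)) fun u _ => ?_
        by_cases hu : G.Adj v u
        · have huA : u ∈ A := by
            by_contra hh; exact hv ((hbip v u hu).2 hh)
          simpa [hu, ind, nu, huA] using hγ u
        · simp [hu, ind]
      simp only [mul_sub, mul_one, Finset.sum_sub_distrib, ← mul_div_assoc, ← Finset.sum_div]
      rw [← hZ]
      have := div_le_div_of_nonneg_right hle (show (0:ℝ) ≤ G.degree v + 1 by positivity)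
      have e3 : (1 - γ ^ G.degree v / ((G.degree v : ℝ) + 1)) * Z =
        Z - γ ^ G.degree v * Z / ((G.degree v : ℝ) + 1) := by ring
      rw [e3]
      linarith

theorem pow_natCard {V : Type*} [Fintype V] (p : V → Prop) (x : ℝ) :
    x ^ Nat.card {v : V // p v} = ∏ v, if p v then x else 1 := by
  rw [Finset.prod_ite, Finset.prod_const, Finset.prod_const_one, mul_one,
    Nat.card_eq_fintype_card, Fintype.card_subtype]

theorem permTutte_eq {V : Type*} [Fintype V] [DecidableEq V] (G : SimpleGraph V)
    (A : Set V) (x : ℝ) :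
    permTutte G A x 0 = ((Fintype.card V).factorial : ℝ)⁻¹ *
      ∑ π : V ≃ Fin (Fintype.card V), ∏ v, phi G A x v π := by
  unfold permTutte
  congr 1
  refine Finset.sum_congr rfl fun π _ => ?_
  rw [pow_natCard (fun i => i ∈ A ∧ ∀ j, G.Adj i j → π j < π i),
    pow_natCard (fun j => j ∉ A ∧ ∀ i, G.Adj j i → π i < π j), ← Finset.prod_mul_distrib]
  refine Finset.prod_congr rfl fun v _ => ?_
  have h : (∀ u, G.Adj v u → π u ≤ π v) ↔ ∀ u, G.Adj v u → π u < π v :=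
    ⟨fun h u hu => lt_of_le_of_ne (h u hu) (fun e => hu.ne' (π.injective e)),
      fun h u hu => (h u hu).le⟩
  unfold phi
  rw [h]
  by_cases hv : v ∈ A <;> by_cases hp : ∀ u, G.Adj v u → π u < π v
  · rw [ind_pos hp, if_pos ⟨hv, hp⟩, if_neg (fun h => h.1 hv), if_pos hv]; ring
  · rw [ind_neg hp, if_neg (fun h => hp h.2), if_neg (fun h => hp h.2), if_pos hv]; ring
  · rw [ind_pos hp, if_neg (fun h => hv h.1), if_pos ⟨hv, hp⟩, if_neg hv]; ring
  · rw [ind_neg hp, if_neg (fun h => hp h.2), if_neg (fun h => hp h.2), if_neg hv]; ring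

theorem permTutte_swap {V : Type*} [Fintype V] [DecidableEq V] (G : SimpleGraph V)
    (A : Set V) (x : ℝ) : permTutte G A 0 x = permTutte G Aᶜ x 0 := by
  unfold permTutte
  congr 1
  refine Finset.sum_congr rfl fun π _ => ?_
  rw [mul_comm]
  simp only [Set.mem_compl_iff, not_not]

theorem phi_congr {V α β : Type*} [LinearOrder α] [LinearOrder β] (G : SimpleGraph V) (A : Set V)
    (x : ℝ) (v : V) (f : V → α) (g : V → β) (h : ∀ u v, f u ≤ f v ↔ g u ≤ g v) :
    phi G A x v f = phi G A x v g := by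
  have h' : ∀ u v, f u < f v ↔ g u < g v := fun u v => by
    rw [← not_le, ← not_le, h]
  unfold phi
  simp only [h, h']

theorem sum_perm {V : Type*} [Fintype V] [DecidableEq V] (G : SimpleGraph V)
    (A : Set V) (x : ℝ) {N : ℕ} (f : V → Fin N) (hf : Function.Injective f) :
    ∑ σ : Equiv.Perm V, ∏ v, phi G A x v (f ∘ σ) =
      ∑ π : V ≃ Fin (Fintype.card V), ∏ v, phi G A x v π := by
  have : ∃ π : V ≃ Fin (Fintype.card V), ∀ u v, f u ≤ f v ↔ π u ≤ π v := by
    let : LinearOrder V := LinearOrder.lift' f hf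
    let e : Fin (Fintype.card V) ≃o V := monoEquivOfFin V rfl
    exact ⟨e.symm.toEquiv, fun u v => (e.symm.le_iff_le (x := u) (y := v)).symm⟩
  obtain ⟨π, hπ⟩ := this
  let E : Equiv.Perm V ≃ (V ≃ Fin (Fintype.card V)) := (Equiv.refl V).equivCongr π
  rw [← Equiv.sum_comp E]
  refine Finset.sum_congr rfl fun σ _ => Finset.prod_congr rfl fun v _ => ?_
  refine phi_congr _ _ _ _ _ _ fun u v => ?_
  simp [E, hπ]

theorem sum_inj {V : Type*} [Fintype V] [DecidableEq V] (G : SimpleGraph V)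
    (A : Set V) (x : ℝ) (N : ℕ) :
    ∑ f : V ↪ Fin N, ∏ v, phi G A x v f =
      (N.descFactorial (Fintype.card V) : ℝ) * permTutte G A x 0 := by
  have h1 : ∑ σ : Equiv.Perm V, ∑ f : V ↪ Fin N, ∏ v, phi G A x v (f ∘ σ) =
      ((Fintype.card V).factorial : ℝ) * ∑ f : V ↪ Fin N, ∏ v, phi G A x v f := by
    have : ∀ σ : Equiv.Perm V, ∑ f : V ↪ Fin N, ∏ v, phi G A x v (f ∘ σ) =
        ∑ f : V ↪ Fin N, ∏ v, phi G A x v f := by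
      intro σ
      let E : (V ↪ Fin N) ≃ (V ↪ Fin N) := Equiv.embeddingCongr σ.symm (Equiv.refl _)
      exact Equiv.sum_comp E (fun f : V ↪ Fin N => ∏ v, phi G A x v f)
    simp only [this]
    rw [Finset.sum_const, Finset.card_univ, Fintype.card_perm, nsmul_eq_mul]
  rw [Finset.sum_comm] at h1
  simp only [fun f : V ↪ Fin N => sum_perm G A x f f.injective] at h1
  rw [Finset.sum_const, Finset.card_univ, Fintype.card_embedding_eq, Fintype.card_fin,
    nsmul_eq_mul] at h1
  have hm : ((Fintype.card V).factorial : ℝ) ≠ 0 := by positivity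
  rw [permTutte_eq]
  field_simp
  linarith

theorem permTutte_nonneg {V : Type*} [Fintype V] [DecidableEq V] (G : SimpleGraph V)
    (A : Set V) (x : ℝ) (hx : 1 ≤ x) : 0 ≤ permTutte G A x 0 := by
  rw [permTutte_eq]
  exact mul_nonneg (by positivity) (Finset.sum_nonneg fun π _ =>
    Finset.prod_nonneg fun v _ => phi_nonneg G A x hx v _)

theorem sum_all_le {V : Type*} [Fintype V] [DecidableEq V] (G : SimpleGraph V)
    (A : Set V) (x : ℝ) (hx : 1 ≤ x) (N : ℕ) :
    ∑ f : V → Fin N, ∏ v, phi G A x v f ≤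
      (N : ℝ) ^ Fintype.card V * permTutte G A x 0 +
      ((N : ℝ) ^ Fintype.card V - N.descFactorial (Fintype.card V)) * x ^ Fintype.card V := by
  have hd : (N.descFactorial (Fintype.card V) : ℝ) ≤ (N : ℝ) ^ Fintype.card V := by
    exact_mod_cast Nat.descFactorial_le_pow N _
  have hT := permTutte_nonneg G A x hx
  have hinj := sum_inj G A x N
  let X := x ^ Fintype.card V
  have hsplit := Finset.sum_filter_add_sum_filter_not Finset.univ
    (fun f : V → Fin N => Function.Injective f) (fun f => X - ∏ v, phi G A x v f)
  have hX : ∀ f : V → Fin N, 0 ≤ X - ∏ v, phi G A x v f := by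
    intro f
    rw [sub_nonneg]
    calc ∏ v, phi G A x v f ≤ ∏ v : V, x :=
          Finset.prod_le_prod (fun v _ => phi_nonneg G A x hx v f) (fun v _ => phi_le G A x hx v f)
      _ = X := by simp [X]
  have h2 : ∑ f ∈ Finset.univ.filter (fun f : V → Fin N => Function.Injective f),
      (X - ∏ v, phi G A x v f) = ∑ f : V ↪ Fin N, (X - ∏ v, phi G A x v f) := by
    rw [Finset.sum_subtype (p := fun f : V → Fin N => Function.Injective f) _ (by simp)]
    exact Equiv.sum_comp (Equiv.subtypeInjectiveEquivEmbedding V (Fin N))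
      (fun f => X - ∏ v, phi G A x v f)
  have h3 : 0 ≤ ∑ f ∈ Finset.univ.filter (fun f : V → Fin N => ¬ Function.Injective f),
      (X - ∏ v, phi G A x v f) := Finset.sum_nonneg fun f _ => hX f
  have h4 : ∑ f : V → Fin N, (X - ∏ v, phi G A x v f) =
      (N : ℝ) ^ Fintype.card V * X - ∑ f : V → Fin N, ∏ v, phi G A x v f := by
    rw [Finset.sum_sub_distrib]
    simp
  rw [h2, h4, Finset.sum_sub_distrib, hinj] at hsplit
  simp only [Finset.sum_const, Finset.card_univ, Fintype.card_embedding_eq, Fintype.card_fin,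
    nsmul_eq_mul] at hsplit
  have := mul_le_mul_of_nonneg_right hd hT
  change _ ≤ _ + _ * X
  linarith

theorem half_bound {V : Type*} [Fintype V] [DecidableEq V] (G : SimpleGraph V)
    [DecidableRel G.Adj] (A : Set V) (hbip : IsBipartition G A) (δ : ℕ)
    (hdeg : ∀ v : V, δ ≤ G.degree v)
    (x s : ℝ) (hx : 1 ≤ x) (hs0 : 0 ≤ s) (hs1 : s ≤ 1) :
    ∏ v, (if v ∈ A then
      ((G.degree v : ℝ) + x) * s / ((G.degree v : ℝ) + 1) + x * (1 - s)
      else (s - s / ((G.degree v : ℝ) + 1) * gam x s δ ^ G.degree v)) ≤ permTutte G A x 0 := by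
  let m := Fintype.card V
  let S : ℕ → ℝ := fun N => (⌊s * N⌋₊ : ℝ) / N
  have hS : Filter.Tendsto S Filter.atTop (nhds s) :=
    (tendsto_nat_floor_mul_div_atTop hs0).comp tendsto_natCast_atTop_atTop
  have hden : ∀ t : ℝ, 0 ≤ t → t ≤ 1 → 0 < ((δ : ℝ) + x) * t + ((δ : ℝ) + 1) * x * (1 - t) := by
    intro t h0 h1
    have hδ : (0:ℝ) ≤ δ := Nat.cast_nonneg _
    have h2 : ((δ : ℝ) + 1) * x * (1 - t) ≥ 1 * (1 - t) :=
      mul_le_mul_of_nonneg_right (by nlinarith) (by linarith)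
    have h3 : ((δ : ℝ) + x) * t ≥ 1 * t := mul_le_mul_of_nonneg_right (by linarith) h0
    linarith
  have hgam : Filter.Tendsto (fun N => gam x (S N) δ) Filter.atTop (nhds (gam x s δ)) := by
    unfold gam
    refine Filter.Tendsto.div (hS.const_mul _)
      ((hS.const_mul _).add ((tendsto_const_nhds.sub hS).const_mul _)) (hden s hs0 hs1).ne'
  have hr : Filter.Tendsto (fun N : ℕ => (N.descFactorial m : ℝ) / (N : ℝ) ^ m)
      Filter.atTop (nhds 1) := by
    have := (isEquivalent_descFactorial m)
    refine (Asymptotics.isEquivalent_iff_tendsto_one ?_).1 this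
    filter_upwards [Filter.eventually_gt_atTop 0] with N hN
    positivity
  have hR : Filter.Tendsto (fun N : ℕ => permTutte G A x 0 +
      (1 - (N.descFactorial m : ℝ) / (N : ℝ) ^ m) * x ^ m) Filter.atTop
      (nhds (permTutte G A x 0)) := by
    have := ((tendsto_const_nhds (x := (1:ℝ))).sub hr).mul_const (x ^ m)
    simpa using (tendsto_const_nhds (x := permTutte G A x 0)).add this
  have hL : Filter.Tendsto (fun N : ℕ => ∏ v, (if v ∈ A then
      ((G.degree v : ℝ) + x) * S N / ((G.degree v : ℝ) + 1) + x * (1 - S N)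
      else (S N - S N / ((G.degree v : ℝ) + 1) * gam x (S N) δ ^ G.degree v))) Filter.atTop
      (nhds (∏ v, (if v ∈ A then
      ((G.degree v : ℝ) + x) * s / ((G.degree v : ℝ) + 1) + x * (1 - s)
      else (s - s / ((G.degree v : ℝ) + 1) * gam x s δ ^ G.degree v)))) := by
    refine tendsto_finsetProd _ fun v _ => ?_
    by_cases hv : v ∈ A
    · simp only [hv, if_true]
      exact ((hS.const_mul _).div_const _).add ((tendsto_const_nhds.sub hS).const_mul _)
    · simp only [hv, if_false]
      exact hS.sub ((hS.div_const _).mul (hgam.pow _))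
  refine le_of_tendsto_of_tendsto hL hR ?_
  filter_upwards [Filter.eventually_gt_atTop 0] with N hN
  have hN' : (0:ℝ) < N := by exact_mod_cast hN
  set K := ⌊s * N⌋₊ with hKdef
  have hK : K ≤ N := by
    have : (K:ℝ) ≤ s * N := Nat.floor_le (by positivity)
    have : (K:ℝ) ≤ N := by nlinarith
    exact_mod_cast this
  have hK' : (K:ℝ) ≤ N := by exact_mod_cast hK
  have hSN : S N = (K:ℝ) / N := rfl
  have hKN : (K:ℝ) = S N * N := by rw [hSN]; field_simp
  have hS0 : 0 ≤ S N := by rw [hSN]; positivity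
  have hS1 : S N ≤ 1 := by rw [hSN, div_le_one hN']; exact hK'
  set t := S N with ht
  clear_value t K
  have hδ0 : (0:ℝ) ≤ δ := Nat.cast_nonneg _
  have hdn := hden t hS0 hS1
  have hg0 : 0 ≤ gam x t δ := by
    unfold gam
    exact div_nonneg (mul_nonneg (by linarith) hS0) hdn.le
  have hq : 0 ≤ ((δ : ℝ) + 1) * x * (1 - t) :=
    mul_nonneg (mul_nonneg (by linarith) (by linarith)) (by linarith)
  have hg1 : gam x t δ ≤ 1 := by
    unfold gam
    rw [div_le_one hdn]
    linarith
  have D := stepD G A hbip x hx N K hK (gam x t δ) hg0 hg1 ?_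
  · have U := D.trans (sum_all_le G A x hx N)
    have hNm : (0:ℝ) < (N:ℝ) ^ m := by positivity
    have e1 : ∏ v, (if v ∈ A then
      (K : ℝ) * (((G.degree v : ℝ) + x) / ((G.degree v : ℝ) + 1)) + ((N : ℝ) - K) * x
      else (K : ℝ) * (1 - gam x t δ ^ G.degree v / ((G.degree v : ℝ) + 1))) =
      (N:ℝ) ^ m * ∏ v, (if v ∈ A then
      ((G.degree v : ℝ) + x) * t / ((G.degree v : ℝ) + 1) + x * (1 - t)
      else (t - t / ((G.degree v : ℝ) + 1) * gam x t δ ^ G.degree v)) := by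
      have : (N:ℝ) ^ m = ∏ v : V, (N:ℝ) := by simp [m]
      rw [this, ← Finset.prod_mul_distrib]
      refine Finset.prod_congr rfl fun v _ => ?_
      rw [hKN]
      split_ifs <;> ring
    rw [e1] at U
    refine le_of_mul_le_mul_left (U.trans (le_of_eq ?_)) hNm
    change (N:ℝ) ^ m * _ + ((N:ℝ) ^ m - (N.descFactorial m : ℝ)) * x ^ m = _
    field_simp
  · intro v
    have hv : (δ:ℝ) ≤ G.degree v := by exact_mod_cast hdeg v
    set d : ℝ := (G.degree v : ℝ)
    have hd1 : 0 < d + 1 := by linarith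
    unfold gam
    rw [hKN, div_mul_eq_mul_div (((δ : ℝ) + x) * t), le_div_iff₀ hdn]
    have e : ((d + x) / (d + 1)) = 1 + (x - 1) / (d + 1) := by field_simp; ring
    have e' : ((δ : ℝ) + x) = (1 + (x - 1) / (δ + 1)) * (δ + 1) := by field_simp; ring
    have hle : (x - 1) / (d + 1) ≤ (x - 1) / (δ + 1) :=
      div_le_div_of_nonneg_left (by linarith) (by linarith) (by linarith)
    rw [e, e']
    generalize (x - 1) / (d + 1) = p at *
    generalize (x - 1) / ((δ:ℝ) + 1) = q at *
    have : 0 ≤ t * N * (1 - t) * x * (δ + 1) * (q - p) := by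
      have := sub_nonneg.2 hle
      have := sub_nonneg.2 hS1
      positivity
    linarith

theorem Gfun_anti (d : ℕ) (x s γ γ' : ℝ) (hx : 1 ≤ x) (hs0 : 0 ≤ s) (hs1 : s ≤ 1)
    (h0 : 0 ≤ γ) (h : γ ≤ γ') : Gfun d x s γ' ≤ Gfun d x s γ := by
  unfold Gfun
  have hd : (0:ℝ) ≤ d := Nat.cast_nonneg _
  have h1 : 0 ≤ 1 - s := by linarith
  refine mul_le_mul_of_nonneg_left (sub_le_sub_left (mul_le_mul_of_nonneg_left
    (pow_le_pow_left₀ h0 h _) (by positivity)) _) (by positivity)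

theorem Gfun_nonneg (d : ℕ) (x s γ : ℝ) (hx : 1 ≤ x) (hs0 : 0 ≤ s) (hs1 : s ≤ 1)
    (h0 : 0 ≤ γ) (h : γ ≤ 1) : 0 ≤ Gfun d x s γ := by
  refine le_trans ?_ (Gfun_anti d x s γ 1 hx hs0 hs1 h0 h)
  unfold Gfun
  have hd : (0:ℝ) ≤ d := Nat.cast_nonneg _
  have h1 : 0 ≤ 1 - s := by linarith
  refine mul_nonneg (by positivity) ?_
  rw [one_pow, mul_one, sub_nonneg]
  exact div_le_self hs0 (by linarith)

/-- If `H` is bipartite with minimum degree at least `δ ≥ 1`, `x ≥ 2` and `0 ≤ s ≤ 1`, then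
`T̃_H(x,0)·T̃_H(0,x) ≥ Π_v G(d_v,x,s,γ_{x,s}(δ)) ≥ Π_v G(d_v,x,s,s)`. -/
theorem permTutte_mul_ge_prod_Gfun
    {V : Type*} [Fintype V] [DecidableEq V] (G : SimpleGraph V) [DecidableRel G.Adj]
    (A : Set V) (hbip : IsBipartition G A) (δ : ℕ) (hδ : 1 ≤ δ)
    (hdeg : ∀ v : V, δ ≤ G.degree v)
    (x s : ℝ) (hx : 2 ≤ x) (hs0 : 0 ≤ s) (hs1 : s ≤ 1) :
    permTutte G A x 0 * permTutte G A 0 x ≥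
        ∏ v : V, Gfun (G.degree v) x s (gam x s (δ : ℝ)) ∧
    (∏ v : V, Gfun (G.degree v) x s (gam x s (δ : ℝ))) ≥
        ∏ v : V, Gfun (G.degree v) x s s := by
  have hx1 : 1 ≤ x := by linarith
  have hδ0 : (0:ℝ) ≤ δ := Nat.cast_nonneg _
  have hs : 0 ≤ 1 - s := by linarith
  have hnum : 0 ≤ ((δ : ℝ) + x) * s := mul_nonneg (by linarith) hs0
  have hkey : ((δ : ℝ) + x) * (1 - s) ≤ ((δ : ℝ) + 1) * x * (1 - s) :=
    mul_le_mul_of_nonneg_right (by nlinarith) hs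
  have hden : 0 < ((δ : ℝ) + x) * s + ((δ : ℝ) + 1) * x * (1 - s) := by
    nlinarith
  have hg0 : 0 ≤ gam x s δ := div_nonneg hnum hden.le
  have hgs : gam x s δ ≤ s := by
    unfold gam
    rw [div_le_iff₀ hden]
    nlinarith [mul_le_mul_of_nonneg_left hkey hs0]
  constructor
  · have hbip' : IsBipartition G Aᶜ := by
      intro u v huv
      have := hbip u v huv
      simp only [Set.mem_compl_iff]
      tauto
    have h1 := half_bound G A hbip δ hdeg x s hx1 hs0 hs1
    have h2 := half_bound G Aᶜ hbip' δ hdeg x s hx1 hs0 hs1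
    rw [permTutte_swap]
    have hnn : ∀ v, 0 ≤ s - s / ((G.degree v : ℝ) + 1) * gam x s δ ^ G.degree v := by
      intro v
      have hd : (0:ℝ) ≤ G.degree v := Nat.cast_nonneg _
      have ha : s / ((G.degree v : ℝ) + 1) ≤ s := div_le_self hs0 (by linarith)
      have hb : gam x s δ ^ G.degree v ≤ 1 := pow_le_one₀ hg0 (hgs.trans hs1)
      have : s / ((G.degree v : ℝ) + 1) * gam x s δ ^ G.degree v ≤
        s / ((G.degree v : ℝ) + 1) := mul_le_of_le_one_right (by positivity) hb
      linarith
    refine le_trans (le_of_eq ?_) (mul_le_mul h1 h2 (Finset.prod_nonneg fun v _ => ?_)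
      (permTutte_nonneg G A x hx1))
    swap
    · split_ifs
      · positivity
      · exact hnn v
    rw [← Finset.prod_mul_distrib]
    refine Finset.prod_congr rfl fun v _ => ?_
    unfold Gfun
    by_cases hv : v ∈ A
    · simp [hv]
    · simp [hv, mul_comm]
  · exact Finset.prod_le_prod (fun v _ => Gfun_nonneg _ x s s hx1 hs0 hs1 hs0 hs1)
      fun v _ => Gfun_anti _ x s _ _ hx1 hs0 hs1 hg0 hgs
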